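/- Euler relation for jackets (general case): for any (D+1)-tuple σ of permutations of {1,…,k} and every cyclic permutation π of the color set {0,1,…,D}, there exists a nonnegative integer g (the genus of the jacket J_π, equal to the sum of the genera of its connected components) such that F_π(σ) = (D−1)·k + 2·C(σ) − 2g. -/

import Mathlib

/-- Number of cycles of a permutation counting fixed points: the number of orbits
on `Fin k` of the cyclic group generated by `τ`. -/
noncomputable def cycleCount {k : ℕ} (τ : Equiv.Perm (Fin k)) : ℕ :=
  Nat.card (MulAction.orbitRel.Quotient (Subgroup.zpowers τ) (Fin k))

/-- Total number of faces of the `(D+1)`-colored graph encoded by `σ`: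
`F(σ) = Σ_{c₁ < c₂} c(σ⁽ᶜ¹⁾ ∘ (σ⁽ᶜ²⁾)⁻¹)`. -/
noncomputable def faceCount {k D : ℕ} (σ : Fin (D + 1) → Equiv.Perm (Fin k)) : ℕ :=
  ∑ p ∈ Finset.univ.filter (fun p : Fin (D + 1) × Fin (D + 1) => p.1 < p.2),
    cycleCount (σ p.1 * (σ p.2)⁻¹)

/-- Number of connected components of the `(D+1)`-colored graph encoded by `σ`:
the number of orbits on `Fin k` of the subgroup generated by `(σ⁽⁰⁾)⁻¹ ∘ σ⁽ᶜ⁾`, `1 ≤ c ≤ D`. -/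
noncomputable def compCount {k D : ℕ} (σ : Fin (D + 1) → Equiv.Perm (Fin k)) : ℕ :=
  Nat.card (MulAction.orbitRel.Quotient
    (Subgroup.closure
      {g : Equiv.Perm (Fin k) | ∃ c : Fin (D + 1), c ≠ 0 ∧ g = (σ 0)⁻¹ * σ c}) (Fin k))

/-- Face count of the jacket associated to the cyclic color permutation `π`:
`F_π(σ) = Σ_{q=0}^{D} c(σ^{(π^q(0))} ∘ (σ^{(π^{q+1}(0))})⁻¹)`. -/
noncomputable def jacketFaceCount {k D : ℕ} (σ : Fin (D + 1) → Equiv.Perm (Fin k))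
    (π : Equiv.Perm (Fin (D + 1))) : ℕ :=
  ∑ q ∈ Finset.range (D + 1),
    cycleCount (σ ((π ^ q) 0) * (σ ((π ^ (q + 1)) 0))⁻¹)

/-!
A permutation `τ` of an `n`-element set is a product of `n - c(τ)` transpositions, where `c` counts
cycles. Multiply the identity successively by the transpositions that make up `τ₁, …, τₘ`, where
`τ₁ ⋯ τₘ = 1`, and follow two partitions: the cycles of the current product, and the orbits of the
group generated by the factors used so far. A transposition that joins two orbits also joins two
cycles; any other one changes the number of cycles by one and keeps the orbits. So
`2 (orbits) - cycles` drops by at most `1` at each step, which gives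
`∑ c(τᵢ) ≤ (m - 2) n + 2 (orbits)`, and comparing signatures shows that the difference is even. The
faces of a jacket are the cycles of the permutations `σ^{(π^q(0))} ∘ (σ^{(π^{q+1}(0))})⁻¹`, whose
product telescopes to `1`.
-/

open Equiv

section GlueClasses

variable {α : Type*} {r s : Setoid α} {x y : α}

open Classical in
/-- The equivalence relation obtained from `r` by merging the classes of `x` and `y`, encoded as the
kernel of the map that sends the class of `y` to the class of `x` and fixes all others. -/
noncomputable def glueClasses (r : Setoid α) (x y : α) : Setoid α :=
  Setoid.ker (Function.update id (Quotient.mk r y) (Quotient.mk r x) ∘ Quotient.mk r)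

theorem glueClasses_le_iff : glueClasses r x y ≤ s ↔ r ≤ s ∧ s x y := by
  classical
  constructor
  · intro h
    refine ⟨fun a b hab => h ?_, h ?_⟩
    · exact congrArg (Function.update id _ _) (Quotient.sound hab)
    · rw [glueClasses, Setoid.ker_def]
      simp [Function.update_apply]
  · rintro ⟨hrs, hxy⟩ a b hab
    let toS : Quotient r → Quotient s := Quotient.map' id hrs
    have toS_update (c : Quotient r) :
        toS (Function.update id (Quotient.mk r y) (Quotient.mk r x) c) = toS c := by
      by_cases hc : c = Quotient.mk r y
      · rw [hc, Function.update_self]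
        exact Quotient.sound hxy
      · rw [Function.update_of_ne hc, id]
    have hab' : toS (Quotient.mk r a) = toS (Quotient.mk r b) := by
      rw [← toS_update, ← toS_update (Quotient.mk r b)]
      exact congrArg toS hab
    exact Quotient.exact hab'

theorem glueClasses_eq_self (h : r x y) : glueClasses r x y = r :=
  le_antisymm (glueClasses_le_iff.2 ⟨le_rfl, h⟩) (glueClasses_le_iff.1 le_rfl).1

theorem card_quotient_glueClasses_add_one [Finite α] (h : ¬ r x y) :
    Nat.card (Quotient (glueClasses r x y)) + 1 = Nat.card (Quotient r) := by
  classical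
  have hne : Quotient.mk r x ≠ Quotient.mk r y := fun hxy => h (Quotient.exact hxy)
  have hrange : Set.range (Function.update id (Quotient.mk r y) (Quotient.mk r x) ∘ Quotient.mk r) =
      {Quotient.mk r y}ᶜ := by
    rw [Quotient.mk_surjective.range_comp]
    ext c
    constructor
    · rintro ⟨d, rfl⟩
      by_cases hd : d = Quotient.mk r y
      · rwa [hd, Function.update_self]
      · rwa [Function.update_of_ne hd]
    · exact fun hc => ⟨c, Function.update_of_ne hc _ _⟩
  rw [glueClasses, Nat.card_congr (Setoid.quotientKerEquivRange _), hrange, Nat.card_coe_set_eq,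
    add_comm, ← Set.ncard_singleton (Quotient.mk r y), Set.ncard_add_ncard_compl]

end GlueClasses

theorem orbitRel_closure_le_iff {G α : Type*} [Group G] [MulAction G α] {S : Set G}
    {s : Setoid α} :
    MulAction.orbitRel (Subgroup.closure S) α ≤ s ↔ ∀ g ∈ S, ∀ z, s z (g • z) := by
  constructor
  · exact fun h g hg z => s.symm (h ⟨⟨g, Subgroup.subset_closure hg⟩, rfl⟩)
  · intro h
    have key (g : G) (hg : g ∈ Subgroup.closure S) : ∀ z, s z (g • z) := by
      induction hg using Subgroup.closure_induction with
      | mem g hg => exact h g hg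
      | one => exact fun z => by rw [one_smul]
      | mul g g' _ _ ih ih' =>
        exact fun z => by rw [mul_smul]; exact s.trans (ih' z) (ih (g' • z))
      | inv g _ ih => exact fun z => s.symm (by simpa using ih (g⁻¹ • z))
    rintro _ b ⟨⟨g, hg⟩, rfl⟩
    exact s.symm (key g hg b)

section Orbits

variable {α : Type*} {S T : Set (Perm α)} {s : Setoid α} {p τ : Perm α} {x y : α}

/-- The partition of `α` into the orbits of the group generated by a set of permutations. For a
singleton `{τ}` its classes are the cycles of `τ`, fixed points included. -/
def orbitSetoid (S : Set (Perm α)) : Setoid α :=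
  MulAction.orbitRel (Subgroup.closure S) α

/-- The number of orbits of the group generated by a set of permutations. For a singleton `{τ}` it
is the number of cycles of `τ`, fixed points included. -/
noncomputable def orbitCount (S : Set (Perm α)) : ℕ :=
  Nat.card (Quotient (orbitSetoid S))

theorem orbitCount_congr (h : Subgroup.closure S = Subgroup.closure T) :
    orbitCount S = orbitCount T := by
  rw [orbitCount, orbitSetoid, h, orbitCount, orbitSetoid]

theorem orbitSetoid_le_iff : orbitSetoid S ≤ s ↔ ∀ g ∈ S, ∀ z, s z (g z) :=
  orbitRel_closure_le_iff

theorem orbitSetoid_apply (hτ : τ ∈ Subgroup.closure S) (z : α) : orbitSetoid S z (τ z) :=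
  (orbitSetoid S).symm ⟨⟨τ, hτ⟩, rfl⟩

theorem orbitSetoid_singleton_le (hτ : τ ∈ Subgroup.closure S) : orbitSetoid {τ} ≤ orbitSetoid S :=
  orbitSetoid_le_iff.2 (by rintro _ rfl; exact orbitSetoid_apply hτ)

theorem orbitCount_anti [Finite α] (h : S ⊆ T) : orbitCount T ≤ orbitCount S := by
  have hle : orbitSetoid S ≤ orbitSetoid T :=
    orbitSetoid_le_iff.2 fun g hg => orbitSetoid_apply (Subgroup.subset_closure (h hg))
  exact Nat.card_le_card_of_surjective (Quotient.map' id hle)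
    (Quotient.ind fun z => ⟨Quotient.mk _ z, rfl⟩)

theorem orbitSetoid_insert_mul (τ p : Perm α) (S : Set (Perm α)) :
    orbitSetoid (insert τ (insert (τ * p) S)) = orbitSetoid (insert τ (insert p S)) := by
  refine eq_of_forall_ge_iff fun s => ?_
  simp only [orbitSetoid_le_iff, Set.forall_mem_insert]
  refine and_congr_right fun hτ => and_congr_left fun _ => forall_congr' fun z => ?_
  exact ⟨fun h => s.trans h (s.symm (hτ (p z))), fun h => s.trans h (hτ (p z))⟩

theorem orbitCount_pair_mul (τ p : Perm α) : orbitCount {τ, τ * p} = orbitCount {τ, p} := by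
  rw [orbitCount, orbitCount]
  simpa only [insert_empty_eq] using
    congrArg (fun s => Nat.card (Quotient s)) (orbitSetoid_insert_mul τ p ∅)

theorem orbitSetoid_one : orbitSetoid {(1 : Perm α)} = ⊥ :=
  le_bot_iff.1 (orbitSetoid_le_iff.2 (by rintro _ rfl z; rfl))

theorem orbitCount_one : orbitCount {(1 : Perm α)} = Nat.card α := by
  rw [orbitCount, orbitSetoid_one]
  exact (Nat.card_congr ⟨Quotient.mk ⊥, Quotient.lift id fun _ _ h => h, fun _ => rfl,
    Quotient.ind fun _ => rfl⟩).symm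

theorem not_orbitSetoid_singleton (hx : τ x = x) (hxy : x ≠ y) : ¬ orbitSetoid {τ} x y := by
  have hle : orbitSetoid {τ} ≤ Setoid.ker (· = x) := by
    refine orbitSetoid_le_iff.2 ?_
    rintro g hg z
    rw [Set.mem_singleton_iff.1 hg]
    exact propext ⟨fun hz => hz ▸ hx, fun hz => τ.injective (hz.trans hx.symm)⟩
  exact fun h => hxy ((hle h).mp rfl).symm

variable [DecidableEq α]

theorem orbitSetoid_insert_swap (S : Set (Perm α)) (x y : α) :
    orbitSetoid (insert (swap x y) S) = glueClasses (orbitSetoid S) x y := by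
  refine eq_of_forall_ge_iff fun s => ?_
  have hswap : (∀ z, s z (swap x y z)) ↔ s x y := by
    refine ⟨fun h => by simpa using h x, fun h z => ?_⟩
    rw [swap_apply_def]
    split_ifs with hzx hzy
    · rwa [hzx]
    · rw [hzy]
      exact s.symm h
    · exact s.refl z
  rw [glueClasses_le_iff, orbitSetoid_le_iff, orbitSetoid_le_iff, Set.forall_mem_insert, hswap,
    and_comm]

theorem orbitSetoid_insert_swap_of_rel (h : orbitSetoid S x y) :
    orbitSetoid (insert (swap x y) S) = orbitSetoid S := by
  rw [orbitSetoid_insert_swap, glueClasses_eq_self h]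

theorem orbitCount_insert_swap_insert_swap_mul (τ : Perm α) (x : α) (S : Set (Perm α)) :
    orbitCount (insert (swap x (τ x)) (insert (swap x (τ x) * τ) S)) = orbitCount (insert τ S) := by
  have hrel : orbitSetoid (insert τ S) x (τ x) :=
    orbitSetoid_apply (Subgroup.subset_closure (Set.mem_insert τ S)) x
  rw [orbitCount, orbitSetoid_insert_mul, orbitSetoid_insert_swap_of_rel hrel, orbitCount]

theorem perm_swap_mul_apply_induction [Finite α] {motive : Perm α → Prop} (one : motive 1)
    (swap_mul : ∀ (τ : Perm α) (x : α), τ x ≠ x → motive (swap x (τ x) * τ) → motive τ)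
    (τ : Perm α) : motive τ := by
  have := Fintype.ofFinite α
  induction hn : τ.support.card using Nat.strong_induction_on generalizing τ with
  | _ n ih =>
    by_cases hτ : τ = 1
    · rwa [hτ]
    · obtain ⟨x, hx⟩ := DFunLike.ne_iff.1 hτ
      exact swap_mul τ x hx (ih _ (hn ▸ Perm.card_support_swap_mul hx) _ rfl)

section Finite

variable [Finite α]

theorem orbitCount_insert_swap_add_one (h : ¬ orbitSetoid S x y) :
    orbitCount (insert (swap x y) S) + 1 = orbitCount S := by
  rw [orbitCount, orbitSetoid_insert_swap, card_quotient_glueClasses_add_one h, orbitCount]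

theorem orbitCount_le_insert_swap_add_one (S : Set (Perm α)) (x y : α) :
    orbitCount S ≤ orbitCount (insert (swap x y) S) + 1 := by
  by_cases h : orbitSetoid S x y
  · rw [orbitCount, orbitCount, orbitSetoid_insert_swap_of_rel h]
    exact Nat.le_succ _
  · exact (orbitCount_insert_swap_add_one h).ge

theorem orbitCount_swap_mul_apply (hx : τ x ≠ x) :
    orbitCount {swap x (τ x) * τ} = orbitCount {τ} + 1 := by
  have hfixed : (swap x (τ x) * τ) x = x := by simp
  have hmerge := orbitCount_insert_swap_add_one (not_orbitSetoid_singleton hfixed hx.symm)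
  have hsame := orbitCount_insert_swap_insert_swap_mul τ x ∅
  rw [insert_empty_eq, insert_empty_eq] at hsame
  rw [← hmerge, hsame]

end Finite

theorem sign_eq_neg_one_pow_card_add_orbitCount [Fintype α] (τ : Perm α) :
    Perm.sign τ = (-1) ^ (Nat.card α + orbitCount {τ}) := by
  induction τ using perm_swap_mul_apply_induction with
  | one => rw [orbitCount_one, Even.neg_one_pow ⟨_, rfl⟩, Perm.sign_one]
  | swap_mul τ x hx ih =>
    rw [Perm.sign_mul, Perm.sign_swap hx.symm, orbitCount_swap_mul_apply hx, ← add_assoc, pow_succ,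
      mul_comm] at ih
    exact mul_right_cancel ih

section Finite

variable [Finite α]

theorem orbitCount_swap_mul_ne (hxy : x ≠ y) (p : Perm α) :
    orbitCount {swap x y * p} ≠ orbitCount {p} := by
  have := Fintype.ofFinite α
  intro h
  have hsign := Perm.sign_mul (swap x y) p
  rw [sign_eq_neg_one_pow_card_add_orbitCount, h, ← sign_eq_neg_one_pow_card_add_orbitCount,
    Perm.sign_swap hxy, neg_one_mul] at hsign
  exact units_ne_neg_self _ hsign

theorem orbitCount_swap_mul_le_add_one (p : Perm α) (x y : α) :
    orbitCount {swap x y * p} ≤ orbitCount {p} + 1 :=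
  calc orbitCount {swap x y * p}
    _ ≤ orbitCount {swap x y, swap x y * p} + 1 := orbitCount_le_insert_swap_add_one _ x y
    _ = orbitCount {swap x y, p} + 1 := by rw [orbitCount_pair_mul]
    _ ≤ orbitCount {p} + 1 := by grw [orbitCount_anti (Set.subset_insert _ _)]

theorem orbitCount_swap_mul_add_one (h : ¬ orbitSetoid {p} x y) :
    orbitCount {swap x y * p} + 1 = orbitCount {p} := by
  have hxy : x ≠ y := fun hxy => h (hxy ▸ (orbitSetoid {p}).refl x)
  have hmerge := orbitCount_insert_swap_add_one h
  rw [← orbitCount_pair_mul] at hmerge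
  by_cases hrel : orbitSetoid {swap x y * p} x y
  · rwa [orbitCount, orbitSetoid_insert_swap_of_rel hrel] at hmerge
  · exact absurd ((orbitCount_insert_swap_add_one hrel).symm.trans hmerge)
      (orbitCount_swap_mul_ne hxy p)

theorem orbitCount_swap_mul_add_two_mul_le (hp : p ∈ Subgroup.closure S) (x y : α) :
    orbitCount {swap x y * p} + 2 * orbitCount S ≤
      orbitCount {p} + 2 * orbitCount (insert (swap x y) S) + 1 := by
  by_cases hS : orbitSetoid S x y
  · have hcycles := orbitCount_swap_mul_le_add_one p x y
    have horbits : orbitCount (insert (swap x y) S) = orbitCount S := by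
      rw [orbitCount, orbitSetoid_insert_swap_of_rel hS, orbitCount]
    omega
  · have hcycles := orbitCount_swap_mul_add_one fun h => hS (orbitSetoid_singleton_le hp h)
    have horbits := orbitCount_insert_swap_add_one hS
    omega

end Finite

end Orbits

section Genus

variable {α : Type*} [Finite α] {S : Set (Perm α)} {p : Perm α}

theorem orbitCount_mul_add_two_mul_le (hp : p ∈ Subgroup.closure S) (τ : Perm α) :
    orbitCount {τ * p} + orbitCount {τ} + 2 * orbitCount S ≤
      orbitCount {p} + 2 * orbitCount (insert τ S) + Nat.card α := by
  classical
  induction τ using perm_swap_mul_apply_induction with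
  | one =>
    rw [one_mul, orbitCount_one, orbitCount_congr (Subgroup.closure_insert_one S)]
    omega
  | swap_mul τ x hx ih =>
    have hmem : swap x (τ x) * τ * p ∈ Subgroup.closure (insert (swap x (τ x) * τ) S) :=
      mul_mem (Subgroup.subset_closure (Set.mem_insert _ S))
        (Subgroup.closure_mono (Set.subset_insert _ S) hp)
    have hswap := orbitCount_swap_mul_add_two_mul_le hmem x (τ x)
    rw [orbitCount_insert_swap_insert_swap_mul, mul_assoc, swap_mul_self_mul] at hswap
    rw [orbitCount_swap_mul_apply hx, mul_assoc] at ih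
    omega

theorem even_card_add_orbitCount_mul (τ p : Perm α) :
    Even (Nat.card α + orbitCount {τ} + orbitCount {p} + orbitCount {τ * p}) := by
  classical
  have := Fintype.ofFinite α
  have hsign : Perm.sign τ * Perm.sign p * Perm.sign (τ * p) = 1 := by
    rw [← Perm.sign_mul, Int.units_mul_self]
  simp only [sign_eq_neg_one_pow_card_add_orbitCount, ← pow_add] at hsign
  rw [neg_one_pow_eq_one_iff_even (by decide)] at hsign
  grind

theorem exists_orbitCount_mul_add_two_mul_eq (hp : p ∈ Subgroup.closure S) (τ : Perm α) :
    ∃ g, orbitCount {τ * p} + orbitCount {τ} + 2 * orbitCount S + 2 * g =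
      orbitCount {p} + 2 * orbitCount (insert τ S) + Nat.card α := by
  obtain ⟨d, hd⟩ := Nat.exists_eq_add_of_le (orbitCount_mul_add_two_mul_le hp τ)
  obtain ⟨m, hm⟩ := even_card_add_orbitCount_mul τ p
  exact ⟨d / 2, by omega⟩

/-- The Riemann–Hurwitz formula for the branched covering of the sphere with monodromy
`τ₁, …, τₘ, (τ₁ ⋯ τₘ)⁻¹`, where `g` is the sum of the genera of its components. -/
theorem exists_genus_sum_orbitCount (l : List (Perm α)) :
    ∃ g, (l.map fun τ => orbitCount {τ}).sum + orbitCount {l.prod} + Nat.card α + 2 * g =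
      l.length * Nat.card α + 2 * orbitCount {τ | τ ∈ l} := by
  induction l with
  | nil =>
    have hempty : orbitCount {τ : Perm α | τ ∈ []} = Nat.card α := by
      rw [← orbitCount_one (α := α)]
      exact orbitCount_congr (by simp [Subgroup.closure_singleton_one])
    refine ⟨0, ?_⟩
    rw [hempty, List.prod_nil, orbitCount_one, List.map_nil, List.sum_nil, List.length_nil]
    ring
  | cons τ l ih =>
    obtain ⟨g, hg⟩ := ih
    have hmem : l.prod ∈ Subgroup.closure {τ | τ ∈ l} :=
      Subgroup.list_prod_mem _ fun τ hτ => Subgroup.subset_closure hτ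
    obtain ⟨g', hg'⟩ := exists_orbitCount_mul_add_two_mul_eq hmem τ
    have hinsert : {ρ | ρ ∈ τ :: l} = insert τ {ρ | ρ ∈ l} := by
      ext ρ
      exact List.mem_cons
    refine ⟨g + g', ?_⟩
    rw [hinsert, List.prod_cons, List.map_cons, List.sum_cons, List.length_cons]
    linarith

end Genus

theorem orbitSetoid_inv_mul_le_comap_iff {ι α : Type*} {σ : ι → Perm α} {c₀ : ι} {s : Setoid α} :
    orbitSetoid {τ | ∃ c, c ≠ c₀ ∧ τ = (σ c₀)⁻¹ * σ c} ≤ s.comap (σ c₀) ↔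
      ∀ c z, s (σ c₀ z) (σ c z) := by
  rw [orbitSetoid_le_iff]
  constructor
  · intro h c z
    obtain rfl | hc := eq_or_ne c c₀
    · exact s.refl _
    · simpa [Setoid.comap_rel] using h _ ⟨c, hc, rfl⟩ z
  · rintro h _ ⟨c, -, rfl⟩ z
    simpa [Setoid.comap_rel] using h c z

section Jackets

variable {k D : ℕ} {σ : Fin (D + 1) → Perm (Fin k)} {π : Perm (Fin (D + 1))}

/-- The permutations `σ^{(π^q(0))} ∘ (σ^{(π^{q+1}(0))})⁻¹`, `0 ≤ q ≤ D`, whose cycles are the faces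
of the jacket `J_π`. They act on the black vertices. -/
def jacketPerms (σ : Fin (D + 1) → Perm (Fin k)) (π : Perm (Fin (D + 1))) :
    List (Perm (Fin k)) :=
  (List.range (D + 1)).map fun q => σ ((π ^ q) 0) / σ ((π ^ (q + 1)) 0)

theorem cycleCount_eq_orbitCount (τ : Perm (Fin k)) : cycleCount τ = orbitCount {τ} := by
  rw [cycleCount, Subgroup.zpowers_eq_closure]
  rfl

theorem length_jacketPerms : (jacketPerms σ π).length = D + 1 := by
  rw [jacketPerms, List.length_map, List.length_range]

theorem sum_orbitCount_jacketPerms :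
    ((jacketPerms σ π).map fun τ => orbitCount {τ}).sum = jacketFaceCount σ π := by
  simp only [jacketPerms, jacketFaceCount, List.map_map, cycleCount_eq_orbitCount, div_eq_mul_inv]
  rfl

theorem prod_jacketPerms (hπ : π.IsCycleOn (Finset.univ : Finset (Fin (D + 1)))) :
    (jacketPerms σ π).prod = 1 := by
  have hreturn : (π ^ (D + 1)) 0 = 0 := by
    simpa using hπ.pow_card_apply (Finset.mem_univ 0)
  rw [jacketPerms, List.prod_range_div' _ fun q => σ ((π ^ q) 0), hreturn, pow_zero, Perm.one_apply,
    div_self']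

theorem orbitSetoid_jacketPerms_le_iff (hπ : π.IsCycleOn (Finset.univ : Finset (Fin (D + 1))))
    {s : Setoid (Fin k)} :
    orbitSetoid {τ | τ ∈ jacketPerms σ π} ≤ s ↔ ∀ c z, s (σ 0 z) (σ c z) := by
  simp only [orbitSetoid_le_iff, Set.mem_ofPred_eq, jacketPerms, List.forall_mem_map,
    List.mem_range]
  constructor
  · intro h c z
    have hchain (q : ℕ) (hq : q < D + 1) : s (σ 0 z) (σ ((π ^ q) 0) z) := by
      induction q with
      | zero => exact s.refl _
      | succ q ih =>
        have hstep := h q (by omega) (σ ((π ^ (q + 1)) 0) z)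
        rw [div_eq_mul_inv, Perm.mul_apply, Perm.inv_def, symm_apply_apply] at hstep
        exact s.trans (ih (by omega)) (s.symm hstep)
    obtain ⟨q, hq, rfl⟩ := hπ.exists_pow_eq (Finset.mem_univ 0) (Finset.mem_univ c)
    exact hchain q (by simpa using hq)
  · intro h q _ z
    have hz := h ((π ^ (q + 1)) 0) ((σ ((π ^ (q + 1)) 0))⁻¹ z)
    rw [Perm.inv_def, apply_symm_apply] at hz
    exact s.trans (s.symm hz) (h _ _)

theorem comap_orbitSetoid_jacketPerms (hπ : π.IsCycleOn (Finset.univ : Finset (Fin (D + 1)))) :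
    (orbitSetoid {τ | τ ∈ jacketPerms σ π}).comap (σ 0) =
      orbitSetoid {τ | ∃ c, c ≠ 0 ∧ τ = (σ 0)⁻¹ * σ c} := by
  refine le_antisymm (fun a b hab => ?_) ?_
  · have hle : orbitSetoid {τ | τ ∈ jacketPerms σ π} ≤
        (orbitSetoid {τ | ∃ c, c ≠ 0 ∧ τ = (σ 0)⁻¹ * σ c}).comap (σ 0).symm := by
      rw [orbitSetoid_jacketPerms_le_iff hπ, ← orbitSetoid_inv_mul_le_comap_iff]
      intro x y hxy
      simpa only [Setoid.comap_rel, symm_apply_apply] using hxy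
    simpa only [Setoid.comap_rel, symm_apply_apply] using hle hab
  · rw [orbitSetoid_inv_mul_le_comap_iff, ← orbitSetoid_jacketPerms_le_iff hπ]

theorem orbitCount_jacketPerms (hπ : π.IsCycleOn (Finset.univ : Finset (Fin (D + 1)))) :
    orbitCount {τ | τ ∈ jacketPerms σ π} = compCount σ := by
  symm
  refine Nat.card_congr (Quotient.congr (σ 0) fun x y => ?_)
  change orbitSetoid {τ | ∃ c, c ≠ 0 ∧ τ = (σ 0)⁻¹ * σ c} x y ↔ _
  rw [← comap_orbitSetoid_jacketPerms hπ]
  rfl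

end Jackets

/-- Euler relation for jackets (general case): for any `σ` and every cyclic permutation
`π` of the colors there is a nonnegative integer `g` (the genus of the jacket `J_π`,
the sum of the genera of its connected components) with
`F_π(σ) = (D−1)·k + 2·C(σ) − 2g`. -/
theorem jacket_euler (k D : ℕ) (hk : 1 ≤ k) (hD : 2 ≤ D)
    (σ : Fin (D + 1) → Equiv.Perm (Fin k))
    (π : Equiv.Perm (Fin (D + 1))) (hcyc : π.IsCycle) (hsupp : π.support = Finset.univ) :
    ∃ g : ℕ, (jacketFaceCount σ π : ℤ) = (D - 1 : ℤ) * k + 2 * compCount σ - 2 * g := by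
  have hπ : π.IsCycleOn (Finset.univ : Finset (Fin (D + 1))) :=
    hsupp ▸ Perm.coe_support_eq_set_support π ▸ hcyc.isCycleOn
  obtain ⟨g, hg⟩ := exists_genus_sum_orbitCount (jacketPerms σ π)
  rw [sum_orbitCount_jacketPerms, prod_jacketPerms hπ, orbitCount_one, orbitCount_jacketPerms hπ,
    length_jacketPerms, Nat.card_fin] at hg
  refine ⟨g, ?_⟩
  zify at hg
  linarith
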